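/- Let m ≥ 2 be even. Then the Clifford–Fourier transform F_−, defined by F_− f(y) = (2π)^{−m/2} ∫_{ℝ^m} K_−(x,y) f(x) dx with K_− the closed-form Clifford–Fourier kernel, is a well-defined continuous linear operator from the Schwartz space of Cl_{0,m}⊗ℂ-valued functions S(ℝ^m)⊗Cl_{0,m} to itself. -/

import Mathlib

open scoped BigOperators
open MeasureTheory

noncomputable section

namespace CliffordFourier

/-- Concrete model of the complexified Clifford algebra `Cl_{0,m} ⊗ ℂ`:
an element is the family of its complex coefficients on the canonical basis
`e_S = e_{i₁} ⋯ e_{i_k}` (for `S = {i₁ < … < i_k} ⊆ {0,…,m-1}`). -/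
def Cl (m : ℕ) : Type := Finset (Fin m) → ℂ

variable {m : ℕ}

instance : NormedAddCommGroup (Cl m) :=
  inferInstanceAs (NormedAddCommGroup (Finset (Fin m) → ℂ))
instance : NormedSpace ℝ (Cl m) :=
  inferInstanceAs (NormedSpace ℝ (Finset (Fin m) → ℂ))
instance : Module ℂ (Cl m) := inferInstanceAs (Module ℂ (Finset (Fin m) → ℂ))
instance : CompleteSpace (Cl m) := inferInstanceAs (CompleteSpace (Finset (Fin m) → ℂ))

/-- The coefficient of `a` on the basis element `e_S`. -/
def coeff (a : Cl m) : Finset (Fin m) → ℂ := a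

/-- Build an element of the Clifford algebra from its coefficients. -/
def ofCoeff (f : Finset (Fin m) → ℂ) : Cl m := f

/-- `1 = e_∅`. -/
instance : One (Cl m) := ⟨ofCoeff fun S => if S = (∅ : Finset (Fin m)) then 1 else 0⟩

/-- Clifford multiplication, determined by the relations `e_i e_j = - e_j e_i` (`i ≠ j`)
and `e_i² = -1`; on basis elements it is given by
`e_T · e_U = (-1)^{#{(t,u) ∈ T×U : u < t}} · (-1)^{#(T∩U)} · e_{T Δ U}`. -/
instance : Mul (Cl m) :=
  ⟨fun a b => ofCoeff fun S => ∑ T : Finset (Fin m),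
    ((-1 : ℂ) ^ ((((T ×ˢ (symmDiff T S)).filter fun p : Fin m × Fin m => p.2 < p.1).card)
        + (T ∩ (symmDiff T S)).card))
      * coeff a T * coeff b (symmDiff T S)⟩

/-- The generator `e_i`. -/
def e (m : ℕ) (i : Fin m) : Cl m := ofCoeff fun S => if S = {i} then 1 else 0

/-- The embedding of a vector `x ∈ ℝ^m` as `x = Σ_i x_i e_i` in the Clifford algebra. -/
def vec (m : ℕ) (x : Fin m → ℝ) : Cl m := ∑ i : Fin m, (x i : ℂ) • e m i

/-- The Euclidean inner product `⟨x,y⟩ = Σ_i x_i y_i`. -/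
def ip (x y : Fin m → ℝ) : ℝ := ∑ i, x i * y i

/-- The Euclidean norm `|x|`. -/
def nrm (x : Fin m → ℝ) : ℝ := Real.sqrt (ip x x)

/-- The wedge product `x∧y = Σ_{j<k} e_j e_k (x_j y_k - x_k y_j)`. -/
def wedge (m : ℕ) (x y : Fin m → ℝ) : Cl m :=
  ∑ j : Fin m, ∑ k : Fin m,
    if j < k then ((x j * y k - x k * y j : ℝ) : ℂ) • (e m j * e m k) else 0

/-- Complex conjugation of the coefficients. -/
def cconj (a : Cl m) : Cl m := ofCoeff fun S => starRingEnd ℂ (coeff a S)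

/-- The entire function `J̃_a(t) = t^{-a} J_a(t) = Σ_{j≥0} (-1)^j (t/2)^{2j} / (j! Γ(j+a+1) 2^a)`
(for `t > 0` this is literally `t^{-a} J_a(t)`). -/
def besselJt (a t : ℝ) : ℝ :=
  ∑' j : ℕ, ((-1 : ℝ)^j * (t/2) ^ (2*j)) / (j.factorial * Real.Gamma ((j : ℝ) + a + 1) * (2:ℝ)^a)

/-- `A*_{(m-2)/2}(s,t) = Σ_{ℓ=0}^{⌊m/4-3/4⌋} s^{m/2-2-2ℓ} (1/(2^ℓ ℓ!)) Γ(m/2)/Γ(m/2-2ℓ-1) J̃_{(m-2ℓ-3)/2}(t)`. -/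
def Astar (m : ℕ) (s t : ℝ) : ℝ :=
  ∑ l ∈ Finset.range ((m - 3)/4 + 1),
    s ^ (m/2 - 2 - 2*l) * (1 / ((2:ℝ)^l * (l.factorial : ℝ))) *
      (Real.Gamma ((m:ℝ)/2) / Real.Gamma ((m:ℝ)/2 - 2*l - 1)) *
        besselJt (((m:ℝ) - 2*l - 3)/2) t

/-- `B*_{(m-2)/2}(s,t) = -Σ_{ℓ=0}^{⌊m/4-1/2⌋} s^{m/2-1-2ℓ} (1/(2^ℓ ℓ!)) Γ(m/2)/Γ(m/2-2ℓ) J̃_{(m-2ℓ-3)/2}(t)`. -/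
def Bstar (m : ℕ) (s t : ℝ) : ℝ :=
  -∑ l ∈ Finset.range ((m - 2)/4 + 1),
    s ^ (m/2 - 1 - 2*l) * (1 / ((2:ℝ)^l * (l.factorial : ℝ))) *
      (Real.Gamma ((m:ℝ)/2) / Real.Gamma ((m:ℝ)/2 - 2*l)) *
        besselJt (((m:ℝ) - 2*l - 3)/2) t

/-- `C*_{(m-2)/2}(s,t) = -Σ_{ℓ=0}^{⌊m/4-1/2⌋} s^{m/2-1-2ℓ} (1/(2^ℓ ℓ!)) Γ(m/2)/Γ(m/2-2ℓ) J̃_{(m-2ℓ-1)/2}(t)`. -/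
def Cstar (m : ℕ) (s t : ℝ) : ℝ :=
  -∑ l ∈ Finset.range ((m - 2)/4 + 1),
    s ^ (m/2 - 1 - 2*l) * (1 / ((2:ℝ)^l * (l.factorial : ℝ))) *
      (Real.Gamma ((m:ℝ)/2) / Real.Gamma ((m:ℝ)/2 - 2*l)) *
        besselJt (((m:ℝ) - 2*l - 1)/2) t

/-- The closed form of the Clifford-Fourier kernel for even `m`:
for `m = 2` it is `cos(x₁y₂-x₂y₁) + e₁e₂ sin(x₁y₂-x₂y₁)`, and for even `m > 2` it is
`(-1)^{m/2} (π/2)^{1/2} (A*(s,t) + B*(s,t) + (x∧y) C*(s,t))`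
with `s = ⟨x,y⟩`, `t = √(|x|²|y|² - s²)`. -/
def Kcf (m : ℕ) (x y : Fin m → ℝ) : Cl m :=
  if 2 < m then
    ((-1:ℝ)^(m/2) * Real.sqrt (Real.pi/2)) •
      ((Astar m (ip x y) (Real.sqrt (ip x x * ip y y - ip x y^2))
          + Bstar m (ip x y) (Real.sqrt (ip x x * ip y y - ip x y^2))) • (1 : Cl m)
        + Cstar m (ip x y) (Real.sqrt (ip x x * ip y y - ip x y^2)) • wedge m x y)
  else
    (Real.cos (∑ j : Fin m, ∑ k : Fin m, if j < k then x j * y k - x k * y j else 0)) • (1 : Cl m)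
      + (Real.sin (∑ j : Fin m, ∑ k : Fin m, if j < k then x j * y k - x k * y j else 0)) •
          (∑ j : Fin m, ∑ k : Fin m, if j < k then e m j * e m k else 0)

/-!
The kernel `K(x, y)` has temperate growth, so `T_K f(y) = ∫ K(x, y) f(x) dx` is smooth of at most
polynomial growth. Decay comes from the operator `L = Δ_x + |y|²`: integrating by parts,
`(1 + |y|²) T_K f = T_{LK} f + T_K ((1 - Δ) f)`, so if `T_{LK} f` decays rapidly, then each use of
this identity improves the bound on `T_K f` by a factor `1 + |y|²`. By induction every kernel
annihilated by some power of `L` maps Schwartz functions to rapidly decreasing ones, and this class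
of kernels is stable under `∂_{y_j}` because `[L, ∂_{y_j}] = -2 y_j` commutes with `L`.

For `m = 2` the kernel satisfies `L K = 0`. For `m > 2` it is a combination of the terms
`h sᵏ J̃_a(t)` with `h = 1` or `h = x_p y_q - x_q y_p`. With `c` the degree of `h` in `x`, applying
`L` gives `|y|²` times `k (k - 1) h sᵏ⁻² J̃_a(t) + (2a + 3 - m - 2c) h sᵏ J̃_{a+1}(t)`,
and the values of `a` in the kernel make the second coefficient vanish after finitely many steps.
The functions `J̃_a` and their derivatives are bounded since `φ_a(w) = J̃_a(√w)` satisfies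
`φ_a' = -φ_{a+1} / 2` and the energy `φ_a² + w φ_{a+1}²` decreases on `w ≥ 0` when `a ≥ -1/2`.
-/

open Function Filter
open scoped SchwartzMap

section TemperateGrowth

variable {E F : Type*} [NormedAddCommGroup E] [NormedSpace ℝ E] [NormedAddCommGroup F]
  [NormedSpace ℝ F]

theorem hasTemperateGrowth_fderiv {f : E → F} (hf : f.HasTemperateGrowth) :
    (fderiv ℝ f).HasTemperateGrowth := by
  refine ⟨hf.1.fderiv_right (m := (⊤ : ℕ∞)) (by simp), fun n => ?_⟩
  obtain ⟨k, C, h⟩ := hf.2 (n + 1)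
  exact ⟨k, C, fun x => by rw [norm_iteratedFDeriv_fderiv]; exact h x⟩

theorem differentiable_of_hasTemperateGrowth {f : E → F} (hf : f.HasTemperateGrowth) :
    Differentiable ℝ f :=
  hf.1.differentiable (by simp)

theorem hasTemperateGrowth_clm_comp {G : Type*} [NormedAddCommGroup G] [NormedSpace ℝ G]
    (T : F →L[ℝ] G) {f : E → F} (hf : f.HasTemperateGrowth) :
    (fun x => T (f x)).HasTemperateGrowth :=
  T.hasTemperateGrowth.comp hf

theorem hasTemperateGrowth_lineDeriv {f : E → F} (hf : f.HasTemperateGrowth) (v : E) :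
    (fun x => lineDeriv ℝ f x v).HasTemperateGrowth := by
  simp only [fun x => (differentiable_of_hasTemperateGrowth hf x).lineDeriv_eq_fderiv (v := v)]
  exact hasTemperateGrowth_clm_comp (ContinuousLinearMap.apply ℝ F v) (hasTemperateGrowth_fderiv hf)

theorem hasLineDerivAt_of_hasTemperateGrowth {f : E → F} (hf : f.HasTemperateGrowth) (x v : E) :
    HasLineDerivAt ℝ f (lineDeriv ℝ f x v) x v :=
  (differentiable_of_hasTemperateGrowth hf x).lineDifferentiableAt.hasLineDerivAt

theorem fderiv_lineDeriv_apply {f : E → F} (hf : f.HasTemperateGrowth) (x v w : E) :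
    fderiv ℝ (fun x => lineDeriv ℝ f x v) x w = fderiv ℝ (fderiv ℝ f) x w v := by
  simp only [fun x => (differentiable_of_hasTemperateGrowth hf x).lineDeriv_eq_fderiv (v := v)]
  have hf' := (differentiable_of_hasTemperateGrowth (hasTemperateGrowth_fderiv hf) x).hasFDerivAt
  simp [(hf'.clm_apply (hasFDerivAt_const v x)).fderiv]

theorem fderiv_fderiv_comm {f : E → F} (hf : f.HasTemperateGrowth) (x v w : E) :
    fderiv ℝ (fderiv ℝ f) x v w = fderiv ℝ (fderiv ℝ f) x w v :=
  (hf.1.contDiffAt.isSymmSndFDerivAt (by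
    rw [minSmoothness_of_isRCLikeNormedField]
    exact WithTop.coe_le_coe.2 (le_top (a := (2 : ℕ∞))))).eq v w

end TemperateGrowth

section SeminormBounded

variable {ι V : Type*} [AddCommGroup V] [Module ℝ V] [TopologicalSpace V]

/-- The functionals `Φ i` are dominated, uniformly in `i`, by one continuous seminorm on `V`. -/
def SeminormBounded (Φ : ι → V → ℝ) : Prop :=
  ∃ q : Seminorm ℝ V, Continuous q ∧ ∀ i f, Φ i f ≤ q f

namespace SeminormBounded

variable {Φ Ψ : ι → V → ℝ}

theorem mono (hΦ : SeminormBounded Φ) (h : ∀ i f, Ψ i f ≤ Φ i f) : SeminormBounded Ψ := by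
  obtain ⟨q, hq, hΦq⟩ := hΦ
  exact ⟨q, hq, fun i f => (h i f).trans (hΦq i f)⟩

theorem add (hΦ : SeminormBounded Φ) (hΨ : SeminormBounded Ψ) :
    SeminormBounded (fun i f => Φ i f + Ψ i f) := by
  obtain ⟨p, hp, hΦp⟩ := hΦ
  obtain ⟨q, hq, hΨq⟩ := hΨ
  exact ⟨p + q, hp.add hq, fun i f => add_le_add (hΦp i f) (hΨq i f)⟩

theorem const_mul (hΦ : SeminormBounded Φ) {c : ℝ} (hc : 0 ≤ c) :
    SeminormBounded (fun i f => c * Φ i f) := by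
  obtain ⟨q, hq, hΦq⟩ := hΦ
  lift c to NNReal using hc
  exact ⟨c • q, hq.const_smul c, fun i f => mul_le_mul_of_nonneg_left (hΦq i f) c.2⟩

theorem comp_clm (hΦ : SeminormBounded Φ) (T : V →L[ℝ] V) :
    SeminormBounded (fun i f => Φ i (T f)) := by
  obtain ⟨q, hq, hΦq⟩ := hΦ
  exact ⟨q.comp T.toLinearMap, hq.comp T.continuous, fun i f => hΦq i (T f)⟩

end SeminormBounded

theorem seminormBounded_zero : SeminormBounded (fun (_ : ι) (_ : V) => 0) :=
  ⟨0, continuous_zero, fun _ _ => le_rfl⟩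

end SeminormBounded

universe u

section KernelIntegral

variable {E F : Type*} {E' G H : Type u} [NormedAddCommGroup E] [NormedSpace ℝ E]
  [NormedAddCommGroup E'] [NormedSpace ℝ E'] [NormedAddCommGroup F] [NormedSpace ℝ F]
  [NormedAddCommGroup G] [NormedSpace ℝ G] [NormedAddCommGroup H] [NormedSpace ℝ H]

theorem exists_norm_kernel_le {K : E × E' → G} (hK : K.HasTemperateGrowth) :
    ∃ (N : ℕ) (C : ℝ), 0 ≤ C ∧
      ∀ x y, ‖K (x, y)‖ ≤ C * (1 + ‖y‖) ^ N * (1 + ‖x‖ ^ N) := by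
  obtain ⟨N, C, hC, h⟩ := hK.norm_iteratedFDeriv_le_uniform 0
  have one_add_max_le (x : E) (y : E') : 1 + ‖(x, y)‖ ≤ (1 + ‖y‖) * (1 + ‖x‖) := by
    have := mul_nonneg (norm_nonneg y) (norm_nonneg x)
    have := max_le_add_of_nonneg (norm_nonneg x) (norm_nonneg y)
    rw [Prod.norm_mk]
    linarith
  refine ⟨N, C * 2 ^ (N - 1), by positivity, fun x y => ?_⟩
  calc ‖K (x, y)‖ ≤ C * (1 + ‖(x, y)‖) ^ N := by simpa using h 0 le_rfl (x, y)
    _ ≤ C * ((1 + ‖y‖) * (1 + ‖x‖)) ^ N := by gcongr; exact one_add_max_le x y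
    _ = C * (1 + ‖y‖) ^ N * (1 + ‖x‖) ^ N := by rw [mul_pow, mul_assoc]
    _ ≤ C * (1 + ‖y‖) ^ N * (2 ^ (N - 1) * (1 ^ N + ‖x‖ ^ N)) := by
        gcongr; exact add_pow_le zero_le_one (norm_nonneg x) N
    _ = C * 2 ^ (N - 1) * (1 + ‖y‖) ^ N * (1 + ‖x‖ ^ N) := by rw [one_pow]; ring

theorem exists_norm_kernel_apply_le (B : G →L[ℝ] F →L[ℝ] H) {K : E × E' → G}
    (hK : K.HasTemperateGrowth) : ∃ (N : ℕ) (C : ℝ), 0 ≤ C ∧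
      ∀ x y v, ‖B (K (x, y)) v‖ ≤ C * (1 + ‖y‖) ^ N * ((1 + ‖x‖ ^ N) * ‖v‖) := by
  obtain ⟨N, C, hC, hKle⟩ := exists_norm_kernel_le hK
  refine ⟨N, ‖B‖ * C, by positivity, fun x y v => ?_⟩
  calc ‖B (K (x, y)) v‖ ≤ ‖B‖ * ‖K (x, y)‖ * ‖v‖ := B.le_opNorm₂ _ _
    _ ≤ ‖B‖ * (C * (1 + ‖y‖) ^ N * (1 + ‖x‖ ^ N)) * ‖v‖ := by gcongr; exact hKle x y
    _ = ‖B‖ * C * (1 + ‖y‖) ^ N * ((1 + ‖x‖ ^ N) * ‖v‖) := by ring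

/-- The partial derivative of a kernel with respect to its second variable. -/
def fderivSnd (K : E × E' → G) (z : E × E') : E' →L[ℝ] G :=
  (fderiv ℝ K z).comp (ContinuousLinearMap.inr ℝ E E')

theorem hasTemperateGrowth_fderivSnd {K : E × E' → G} (hK : K.HasTemperateGrowth) :
    (fderivSnd K).HasTemperateGrowth :=
  hasTemperateGrowth_clm_comp
    ((ContinuousLinearMap.compL ℝ E' (E × E') G).flip (ContinuousLinearMap.inr ℝ E E'))
    (hasTemperateGrowth_fderiv hK)

theorem hasFDerivAt_fderivSnd {K : E × E' → G} (hK : K.HasTemperateGrowth) (x : E) (y : E') :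
    HasFDerivAt (fun y => K (x, y)) (fderivSnd K (x, y)) y :=
  (differentiable_of_hasTemperateGrowth hK (x, y)).hasFDerivAt.comp y (hasFDerivAt_prodMk_right x y)

variable [MeasurableSpace E] {μ : Measure E}

/-- The integral operator with kernel `K`, the values of `K` and `f` being multiplied by means of
the bilinear map `B`. -/
def kernelIntegral (μ : Measure E) (B : G →L[ℝ] F →L[ℝ] H) (K : E × E' → G) (f : E → F)
    (y : E') : H :=
  ∫ x, B (K (x, y)) (f x) ∂μ

variable [μ.HasTemperateGrowth]

theorem seminormBounded_integral_pow_mul (N : ℕ) :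
    SeminormBounded (fun (_ : Unit) (f : 𝓢(E, F)) => ∫ x, ‖x‖ ^ N * ‖f x‖ ∂μ) := by
  have continuous_seminorm (k : ℕ) : Continuous (SchwartzMap.seminorm ℝ k 0 (E := E) (F := F)) :=
    (schwartz_withSeminorms ℝ E F).continuous_seminorm (k, 0)
  have hsum : SeminormBounded fun (_ : Unit) (f : 𝓢(E, F)) =>
      SchwartzMap.seminorm ℝ 0 0 f + SchwartzMap.seminorm ℝ (N + μ.integrablePower) 0 f :=
    ⟨SchwartzMap.seminorm ℝ 0 0 + SchwartzMap.seminorm ℝ (N + μ.integrablePower) 0,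
      (continuous_seminorm 0).add (continuous_seminorm _), fun _ _ => le_rfl⟩
  refine (hsum.const_mul (c := 2 ^ μ.integrablePower *
    ∫ x, (1 + ‖x‖) ^ (-(μ.integrablePower : ℝ)) ∂μ) (by positivity)).mono fun _ f => ?_
  simpa using f.integral_pow_mul_iteratedFDeriv_le ℝ μ N 0

variable [BorelSpace E] [SecondCountableTopology E]

theorem integrable_one_add_norm_pow_mul (f : 𝓢(E, F)) (N : ℕ) :
    Integrable (fun x => (1 + ‖x‖ ^ N) * ‖f x‖) μ := by
  simpa only [add_mul, one_mul] using f.integrable.norm.fun_add (f.integrable_pow_mul μ N)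

theorem seminormBounded_integral_one_add_norm_pow_mul (N : ℕ) :
    SeminormBounded (fun (_ : Unit) (f : 𝓢(E, F)) => ∫ x, (1 + ‖x‖ ^ N) * ‖f x‖ ∂μ) := by
  refine ((seminormBounded_integral_pow_mul (μ := μ) 0).add
    (seminormBounded_integral_pow_mul (μ := μ) N)).mono fun _ f => ?_
  simp only [add_mul, pow_zero]
  exact (integral_add (by simpa using f.integrable.norm) (f.integrable_pow_mul μ N)).le

theorem integrable_kernel (B : G →L[ℝ] F →L[ℝ] H) {K : E × E' → G} (hK : K.HasTemperateGrowth)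
    (f : 𝓢(E, F)) (y : E') : Integrable (fun x => B (K (x, y)) (f x)) μ := by
  obtain ⟨N, C, -, hle⟩ := exists_norm_kernel_apply_le B hK
  have hKc := hK.1.continuous
  exact ((integrable_one_add_norm_pow_mul f N).const_mul (C * (1 + ‖y‖) ^ N)).mono'
    (Continuous.aestronglyMeasurable (by fun_prop)) (Eventually.of_forall fun x => hle x y (f x))

theorem exists_seminormBounded_kernelIntegral (B : G →L[ℝ] F →L[ℝ] H) {K : E × E' → G}
    (hK : K.HasTemperateGrowth) : ∃ N : ℕ, SeminormBounded fun (y : E') (f : 𝓢(E, F)) =>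
      ‖kernelIntegral μ B K f y‖ / (1 + ‖y‖) ^ N := by
  obtain ⟨N, C, hC, hle⟩ := exists_norm_kernel_apply_le B hK
  obtain ⟨q, hq, hint⟩ := seminormBounded_integral_one_add_norm_pow_mul (μ := μ) (F := F) N
  refine ⟨N, SeminormBounded.const_mul ⟨q, hq, fun _ => hint ()⟩ hC |>.mono fun y f => ?_⟩
  rw [div_le_iff₀ (by positivity)]
  calc ‖kernelIntegral μ B K f y‖
      ≤ ∫ x, C * (1 + ‖y‖) ^ N * ((1 + ‖x‖ ^ N) * ‖f x‖) ∂μ :=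
        norm_integral_le_of_norm_le ((integrable_one_add_norm_pow_mul f N).const_mul _)
          (Eventually.of_forall fun x => hle x y (f x))
    _ = C * (∫ x, (1 + ‖x‖ ^ N) * ‖f x‖ ∂μ) * (1 + ‖y‖) ^ N := by
        rw [integral_const_mul]; ring

theorem hasFDerivAt_kernelIntegral (B : G →L[ℝ] F →L[ℝ] H) {K : E × E' → G}
    (hK : K.HasTemperateGrowth) (f : 𝓢(E, F)) (y : E') :
    HasFDerivAt (kernelIntegral μ B K f)
      (kernelIntegral μ (B.precompL E') (fderivSnd K) f y) y := by
  have hK' := hasTemperateGrowth_fderivSnd hK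
  obtain ⟨N, C, hC, hle⟩ := exists_norm_kernel_apply_le (B.precompL E') hK'
  refine hasFDerivAt_integral_of_dominated_of_fderiv_le
    (F' := fun y x => B.precompL E' (fderivSnd K (x, y)) (f x)) (Metric.ball_mem_nhds y one_pos)
    (Eventually.of_forall fun y => (integrable_kernel B hK f y).aestronglyMeasurable)
    (integrable_kernel B hK f y) (integrable_kernel (B.precompL E') hK' f y).aestronglyMeasurable
    (Eventually.of_forall fun x z hz => ?_)
    ((integrable_one_add_norm_pow_mul f N).const_mul (C * (2 + ‖y‖) ^ N))
    (Eventually.of_forall fun x z _ => ?_)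
  · have norm_z_le : 1 + ‖z‖ ≤ 2 + ‖y‖ := by
      linarith [norm_lt_of_mem_ball hz]
    refine (hle x z (f x)).trans ?_
    gcongr
  · exact ((B.flip (f x)).hasFDerivAt.comp z (hasFDerivAt_fderivSnd hK x z)).congr_fderiv
      (by ext; simp)

theorem fderiv_kernelIntegral (B : G →L[ℝ] F →L[ℝ] H) {K : E × E' → G}
    (hK : K.HasTemperateGrowth) (f : 𝓢(E, F)) :
    fderiv ℝ (kernelIntegral μ B K f) = kernelIntegral μ (B.precompL E') (fderivSnd K) f :=
  funext fun y => (hasFDerivAt_kernelIntegral B hK f y).fderiv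

theorem differentiable_kernelIntegral (B : G →L[ℝ] F →L[ℝ] H) {K : E × E' → G}
    (hK : K.HasTemperateGrowth) (f : 𝓢(E, F)) : Differentiable ℝ (kernelIntegral μ B K f) :=
  fun y => (hasFDerivAt_kernelIntegral B hK f y).differentiableAt

theorem contDiff_kernelIntegral (n : ℕ) (B : G →L[ℝ] F →L[ℝ] H) {K : E × E' → G}
    (hK : K.HasTemperateGrowth) (f : 𝓢(E, F)) : ContDiff ℝ n (kernelIntegral μ B K f) := by
  induction n generalizing G H with
  | zero => exact contDiff_zero.2 (differentiable_kernelIntegral B hK f).continuous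
  | succ n ih =>
    push_cast
    refine contDiff_succ_iff_fderiv.2 ⟨differentiable_kernelIntegral B hK f, by simp, ?_⟩
    rw [fderiv_kernelIntegral B hK]
    exact ih (B.precompL E') (hasTemperateGrowth_fderivSnd hK)

end KernelIntegral

section IntegrationByParts

open scoped LineDeriv

variable {E F : Type*} {E' G H : Type u} [NormedAddCommGroup E] [NormedSpace ℝ E]
  [NormedAddCommGroup E'] [NormedSpace ℝ E'] [NormedAddCommGroup F] [NormedSpace ℝ F]
  [NormedAddCommGroup G] [NormedSpace ℝ G] [NormedAddCommGroup H] [NormedSpace ℝ H]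
  [MeasurableSpace E] [BorelSpace E] [FiniteDimensional ℝ E]

theorem kernelIntegral_lineDeriv (μ : Measure E) [μ.IsAddHaarMeasure] (B : G →L[ℝ] F →L[ℝ] H)
    {K : E × E' → G} (hK : K.HasTemperateGrowth) (v : E) (f : 𝓢(E, F)) (y : E') :
    kernelIntegral μ B (fun z => lineDeriv ℝ K z (v, 0)) f y
      = -kernelIntegral μ B K (∂_{v} f : 𝓢(E, F)) y := by
  refine neg_eq_iff_eq_neg.1 (Eq.symm ?_)
  refine integral_bilinear_hasLineDerivAt_right_eq_neg_left_of_integrable (v := v)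
    (integrable_kernel B (hasTemperateGrowth_lineDeriv hK (v, 0)) f y)
    (integrable_kernel B hK (∂_{v} f) y) (integrable_kernel B hK f y) (fun x _ => ?_)
    (fun x _ => (f.hasFDerivAt x).hasLineDerivAt v)
  simpa [HasLineDerivAt] using hasLineDerivAt_of_hasTemperateGrowth hK (x, y) (v, 0)

end IntegrationByParts

/-- Pairs `(x, y)` of vectors of `ℝ^m`, on which the kernels are defined. -/
abbrev VectorPair (m : ℕ) : Type := (Fin m → ℝ) × (Fin m → ℝ)

section Helmholtz

variable {G H : Type} [NormedAddCommGroup G] [NormedSpace ℝ G] [NormedAddCommGroup H]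
  [NormedSpace ℝ H]

/-- `K'` is the partial derivative of `K` in the direction `x_i`. -/
def HasXDeriv (i : Fin m) (K K' : VectorPair m → G) : Prop :=
  ∀ z, HasLineDerivAt ℝ K (K' z) z (Pi.single i 1, 0)

/-- The partial derivative of `K` in the direction `x_i`. -/
def xDeriv (i : Fin m) (K : VectorPair m → G) (z : VectorPair m) : G :=
  lineDeriv ℝ K z (Pi.single i 1, 0)

theorem hasTemperateGrowth_xDeriv {K : VectorPair m → G} (hK : K.HasTemperateGrowth) (i : Fin m) :
    (xDeriv i K).HasTemperateGrowth :=
  hasTemperateGrowth_lineDeriv hK _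

theorem hasXDeriv_xDeriv {K : VectorPair m → G} (hK : K.HasTemperateGrowth) (i : Fin m) :
    HasXDeriv i K (xDeriv i K) :=
  fun z => hasLineDerivAt_of_hasTemperateGrowth hK z _

namespace HasXDeriv

variable {i : Fin m} {K K' L L' : VectorPair m → G}

theorem xDeriv_eq (h : HasXDeriv i K K') : xDeriv i K = K' :=
  funext fun z => (h z).lineDeriv

theorem add (hK : HasXDeriv i K K') (hL : HasXDeriv i L L') :
    HasXDeriv i (fun z => K z + L z) (fun z => K' z + L' z) :=
  fun z => HasDerivAt.add (hK z) (hL z)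

theorem smul {c c' : VectorPair m → ℝ} (hc : HasXDeriv i c c') (hK : HasXDeriv i K K') :
    HasXDeriv i (fun z => c z • K z) (fun z => c z • K' z + c' z • K z) :=
  fun z => by simpa [HasLineDerivAt] using HasDerivAt.fun_smul (hc z) (hK z)

theorem clm_comp (T : G →L[ℝ] H) (hK : HasXDeriv i K K') :
    HasXDeriv i (fun z => T (K z)) (fun z => T (K' z)) :=
  fun z => T.hasFDerivAt.comp_hasDerivAt (0 : ℝ) (hK z)

theorem comp_hasDerivAt {φ φ' : ℝ → ℝ} {c c' : VectorPair m → ℝ}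
    (hφ : ∀ t, HasDerivAt φ (φ' t) t) (hc : HasXDeriv i c c') :
    HasXDeriv i (fun z => φ (c z)) (fun z => φ' (c z) * c' z) :=
  fun z => by simpa [HasLineDerivAt, Function.comp_def] using (hφ _).comp (0 : ℝ) (hc z)

theorem fderivSnd (hK : K.HasTemperateGrowth) :
    HasXDeriv i (fderivSnd K) (CliffordFourier.fderivSnd (xDeriv i K)) := by
  intro z
  have hK'' := (differentiable_of_hasTemperateGrowth (hasTemperateGrowth_fderiv hK) z).hasFDerivAt
  let restrictSnd := (ContinuousLinearMap.compL ℝ (Fin m → ℝ) (VectorPair m) G).flip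
    (ContinuousLinearMap.inr ℝ _ _)
  have fderivSnd_xDeriv : CliffordFourier.fderivSnd (xDeriv i K) z
      = restrictSnd (fderiv ℝ (fderiv ℝ K) z (Pi.single i 1, 0)) := by
    ext1 v
    exact (fderiv_lineDeriv_apply hK z _ _).trans (fderiv_fderiv_comm hK z _ _)
  rw [fderivSnd_xDeriv]
  exact (restrictSnd.hasFDerivAt.comp z hK'').hasLineDerivAt (Pi.single i 1, 0)

end HasXDeriv

theorem hasXDeriv_snd (i : Fin m) (c : (Fin m → ℝ) → ℝ) :
    HasXDeriv i (fun z => c z.2) (fun _ => 0) :=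
  fun z => by simpa [HasLineDerivAt] using hasDerivAt_const (0 : ℝ) (c z.2)

/-- The Helmholtz operator `Δ_x + |y|²` acting on kernels. -/
def helmholtz (K : VectorPair m → G) (z : VectorPair m) : G :=
  ∑ i, xDeriv i (xDeriv i K) z + ip z.2 z.2 • K z

theorem helmholtz_eq_of_hasXDeriv {K : VectorPair m → G} {K₁ K₂ : Fin m → VectorPair m → G}
    (h₁ : ∀ i, HasXDeriv i K (K₁ i)) (h₂ : ∀ i, HasXDeriv i (K₁ i) (K₂ i)) :
    helmholtz K = fun z => ∑ i, K₂ i z + ip z.2 z.2 • K z := by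
  funext z
  simp only [helmholtz, (h₁ _).xDeriv_eq, (h₂ _).xDeriv_eq]

@[fun_prop]
theorem hasTemperateGrowth_fst_apply (i : Fin m) :
    (fun z : VectorPair m => z.1 i).HasTemperateGrowth :=
  hasTemperateGrowth_clm_comp (ContinuousLinearMap.proj i)
    (ContinuousLinearMap.fst ℝ (Fin m → ℝ) (Fin m → ℝ)).hasTemperateGrowth

@[fun_prop]
theorem hasTemperateGrowth_snd_apply (i : Fin m) :
    (fun z : VectorPair m => z.2 i).HasTemperateGrowth :=
  hasTemperateGrowth_clm_comp (ContinuousLinearMap.proj i)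
    (ContinuousLinearMap.snd ℝ (Fin m → ℝ) (Fin m → ℝ)).hasTemperateGrowth

@[fun_prop]
theorem hasTemperateGrowth_ip_snd_snd :
    (fun z : VectorPair m => ip z.2 z.2).HasTemperateGrowth := by
  unfold ip; fun_prop

theorem helmholtz_add {K L : VectorPair m → G} (hK : K.HasTemperateGrowth)
    (hL : L.HasTemperateGrowth) :
    helmholtz (fun z => K z + L z) = fun z => helmholtz K z + helmholtz L z := by
  rw [helmholtz_eq_of_hasXDeriv (fun i => (hasXDeriv_xDeriv hK i).add (hasXDeriv_xDeriv hL i))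
    fun i => (hasXDeriv_xDeriv (hasTemperateGrowth_xDeriv hK i) i).add
      (hasXDeriv_xDeriv (hasTemperateGrowth_xDeriv hL i) i)]
  funext z
  simp only [helmholtz, Finset.sum_add_distrib, smul_add]
  abel

theorem helmholtz_clm_comp (T : G →L[ℝ] H) {K : VectorPair m → G} (hK : K.HasTemperateGrowth) :
    helmholtz (fun z => T (K z)) = fun z => T (helmholtz K z) := by
  rw [helmholtz_eq_of_hasXDeriv (fun i => (hasXDeriv_xDeriv hK i).clm_comp T)
    fun i => (hasXDeriv_xDeriv (hasTemperateGrowth_xDeriv hK i) i).clm_comp T]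
  simp only [helmholtz, map_add, map_sum, map_smul]

theorem helmholtz_smul {c : VectorPair m → ℝ} {K : VectorPair m → G} (hc : c.HasTemperateGrowth)
    (hK : K.HasTemperateGrowth) :
    helmholtz (fun z => c z • K z) = fun z => c z • helmholtz K z
      + (2 : ℝ) • ∑ i, xDeriv i c z • xDeriv i K z + (∑ i, xDeriv i (xDeriv i c) z) • K z := by
  have hc' (i : Fin m) := hasXDeriv_xDeriv hc i
  have hK' (i : Fin m) := hasXDeriv_xDeriv hK i
  have hc'' (i : Fin m) := hasXDeriv_xDeriv (hasTemperateGrowth_xDeriv hc i) i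
  have hK'' (i : Fin m) := hasXDeriv_xDeriv (hasTemperateGrowth_xDeriv hK i) i
  rw [helmholtz_eq_of_hasXDeriv (fun i => (hc' i).smul (hK' i))
    fun i => ((hc' i).smul (hK'' i)).add ((hc'' i).smul (hK' i))]
  funext z
  simp only [helmholtz, Finset.sum_add_distrib, ← Finset.smul_sum, ← Finset.sum_smul]
  module

end Helmholtz

section HelmholtzNilpotent

variable {G H : Type} [NormedAddCommGroup G] [NormedSpace ℝ G] [NormedAddCommGroup H]
  [NormedSpace ℝ H]

theorem hasTemperateGrowth_helmholtz {K : VectorPair m → G} (hK : K.HasTemperateGrowth) :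
    (helmholtz K).HasTemperateGrowth := by
  have hK'' (i : Fin m) : (xDeriv i (xDeriv i K)).HasTemperateGrowth :=
    hasTemperateGrowth_xDeriv (hasTemperateGrowth_xDeriv hK i) i
  unfold helmholtz
  fun_prop

theorem hasFDerivAt_ip_self (y : Fin m → ℝ) :
    HasFDerivAt (fun y : Fin m → ℝ => ip y y)
      (∑ j, (2 * y j) • ContinuousLinearMap.proj (R := ℝ) (φ := fun _ : Fin m => ℝ) j) y := by
  refine HasFDerivAt.fun_sum fun j _ => ?_
  refine ((hasFDerivAt_apply j y).fun_mul (hasFDerivAt_apply j y)).congr_fderiv ?_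
  rw [two_mul, add_smul]

theorem helmholtz_fderivSnd {K : VectorPair m → G} (hK : K.HasTemperateGrowth) :
    helmholtz (fderivSnd K) = fun z => fderivSnd (helmholtz K) z + ∑ j, (-2 * z.2 j) •
      ContinuousLinearMap.smulRightL ℝ (Fin m → ℝ) G (ContinuousLinearMap.proj j) (K z) := by
  have hK' (i : Fin m) := hasTemperateGrowth_xDeriv hK i
  have hK'' (i : Fin m) := hasTemperateGrowth_xDeriv (hK' i) i
  rw [helmholtz_eq_of_hasXDeriv (fun i => HasXDeriv.fderivSnd hK)
    fun i => HasXDeriv.fderivSnd (hK' i)]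
  funext ⟨x, y⟩
  have fderivSnd_helmholtz := (hasFDerivAt_fderivSnd (hasTemperateGrowth_helmholtz hK) x y).unique
    ((HasFDerivAt.fun_sum fun i _ => hasFDerivAt_fderivSnd (hK'' i) x y).add
      ((hasFDerivAt_ip_self y).fun_smul (hasFDerivAt_fderivSnd hK x y)))
  rw [fderivSnd_helmholtz]
  ext v
  simp [Finset.sum_smul, mul_smul, add_assoc]

/-- Kernels of temperate growth annihilated by a power of the Helmholtz operator. -/
inductive HelmholtzNilpotent : (VectorPair m → G) → Prop
  | zero : HelmholtzNilpotent fun _ => 0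
  | step {K : VectorPair m → G} (hK : K.HasTemperateGrowth)
      (hL : HelmholtzNilpotent (helmholtz K)) : HelmholtzNilpotent K

namespace HelmholtzNilpotent

variable {K L : VectorPair m → G}

theorem hasTemperateGrowth (hK : HelmholtzNilpotent K) : K.HasTemperateGrowth := by
  cases hK with
  | zero => fun_prop
  | step hK _ => exact hK

theorem add (hK : HelmholtzNilpotent K) (hL : HelmholtzNilpotent L) :
    HelmholtzNilpotent fun z => K z + L z := by
  induction hK generalizing L with
  | zero => simpa using hL
  | step hK hK' ih =>
    cases hL with
    | zero => simpa using step hK hK'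
    | step hL hL' =>
      refine step (hK.fun_add hL) ?_
      rw [helmholtz_add hK hL]
      exact ih hL'

theorem sum {ι : Type*} (s : Finset ι) {K : ι → VectorPair m → G}
    (hK : ∀ i ∈ s, HelmholtzNilpotent (K i)) : HelmholtzNilpotent fun z => ∑ i ∈ s, K i z := by
  classical
  induction s using Finset.induction_on with
  | empty => simpa using zero
  | insert i s his ih =>
    simp only [Finset.sum_insert his]
    exact (hK i (Finset.mem_insert_self i s)).add
      (ih fun j hj => hK j (Finset.mem_insert_of_mem hj))

theorem clm_comp (T : G →L[ℝ] H) (hK : HelmholtzNilpotent K) :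
    HelmholtzNilpotent fun z => T (K z) := by
  induction hK with
  | zero => simpa using zero
  | step hK _ ih =>
    refine step (hasTemperateGrowth_clm_comp T hK) ?_
    rwa [helmholtz_clm_comp T hK]

theorem const_smul (hK : HelmholtzNilpotent K) (c : ℝ) : HelmholtzNilpotent fun z => c • K z :=
  hK.clm_comp (c • ContinuousLinearMap.id ℝ G)

theorem snd_smul {c : (Fin m → ℝ) → ℝ} (hc : (fun z : VectorPair m => c z.2).HasTemperateGrowth)
    (hK : HelmholtzNilpotent K) : HelmholtzNilpotent fun z => c z.2 • K z := by
  induction hK with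
  | zero => simpa using zero
  | step hK _ ih =>
    refine step (hc.smul hK) ?_
    rw [helmholtz_smul hc hK]
    simpa [(hasXDeriv_snd _ c).xDeriv_eq, (hasXDeriv_snd _ fun _ => (0 : ℝ)).xDeriv_eq] using ih

theorem fderivSnd (hK : HelmholtzNilpotent K) : HelmholtzNilpotent (fderivSnd K) := by
  induction hK with
  | zero =>
    have fderivSnd_zero :
        CliffordFourier.fderivSnd (fun _ : VectorPair m => (0 : G)) = fun _ => 0 :=
      funext fun z => by simp [CliffordFourier.fderivSnd]
    exact fderivSnd_zero ▸ zero
  | @step K hK hLK ih =>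
    refine step (hasTemperateGrowth_fderivSnd hK) ?_
    rw [helmholtz_fderivSnd hK]
    exact ih.add <| sum _ fun j _ => ((step hK hLK).clm_comp _).snd_smul
      (c := fun y => -2 * y j) (by fun_prop)

end HelmholtzNilpotent

end HelmholtzNilpotent

section RapidDecay

open scoped LineDeriv

variable {F G H : Type} [NormedAddCommGroup F] [NormedSpace ℝ F] [NormedAddCommGroup G]
  [NormedSpace ℝ G] [NormedAddCommGroup H] [NormedSpace ℝ H]

variable (m F) in
/-- The operator `1 - Δ` on Schwartz functions. -/
def oneSubLaplacian : 𝓢(Fin m → ℝ, F) →L[ℝ] 𝓢(Fin m → ℝ, F) :=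
  ContinuousLinearMap.id ℝ _ - ∑ i : Fin m,
    (LineDeriv.lineDerivOpCLM ℝ 𝓢(Fin m → ℝ, F) (Pi.single i 1 : Fin m → ℝ)).comp
      (LineDeriv.lineDerivOpCLM ℝ 𝓢(Fin m → ℝ, F) (Pi.single i 1 : Fin m → ℝ))

theorem kernelIntegral_xDeriv_xDeriv (B : G →L[ℝ] F →L[ℝ] H) {K : VectorPair m → G}
    (hK : K.HasTemperateGrowth) (i : Fin m) (f : 𝓢(Fin m → ℝ, F)) (y : Fin m → ℝ) :
    kernelIntegral volume B (xDeriv i (xDeriv i K)) f y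
      = kernelIntegral volume B K (∂_{(Pi.single i 1 : Fin m → ℝ)}
          (∂_{(Pi.single i 1 : Fin m → ℝ)} f : 𝓢(Fin m → ℝ, F)) : 𝓢(Fin m → ℝ, F)) y := by
  have first := kernelIntegral_lineDeriv volume B (hasTemperateGrowth_xDeriv hK i)
    (Pi.single i 1) f y
  have second := kernelIntegral_lineDeriv volume B hK (Pi.single i 1)
    (∂_{(Pi.single i 1 : Fin m → ℝ)} f) y
  exact first.trans (neg_eq_iff_eq_neg.2 second)

theorem kernelIntegral_helmholtz (B : G →L[ℝ] F →L[ℝ] H) {K : VectorPair m → G}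
    (hK : K.HasTemperateGrowth) (f : 𝓢(Fin m → ℝ, F)) (y : Fin m → ℝ) :
    kernelIntegral volume B (helmholtz K) f y
        + kernelIntegral volume B K (oneSubLaplacian m F f) y
      = (1 + ip y y) • kernelIntegral volume B K f y := by
  have kernel_helmholtz : kernelIntegral volume B (helmholtz K) f y
      = ∑ i, kernelIntegral volume B (xDeriv i (xDeriv i K)) f y
        + ip y y • kernelIntegral volume B K f y := by
    have hxx (i : Fin m) := integrable_kernel (μ := volume) B
      (hasTemperateGrowth_xDeriv (hasTemperateGrowth_xDeriv hK i) i) f y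
    simp only [kernelIntegral, helmholtz, map_add, map_sum, map_smul, _root_.add_apply,
      _root_.sum_apply, _root_.smul_apply]
    rw [integral_add (integrable_finsetSum _ fun i _ => hxx i)
      ((integrable_kernel B hK f y).fun_smul _), integral_finsetSum _ fun i _ => hxx i,
      integral_smul]
  have kernel_oneSubLaplacian : kernelIntegral volume B K (oneSubLaplacian m F f) y
      = kernelIntegral volume B K f y
        - ∑ i, kernelIntegral volume B (xDeriv i (xDeriv i K)) f y := by
    simp only [kernelIntegral_xDeriv_xDeriv B hK]
    simp only [kernelIntegral]
    rw [← integral_finsetSum _ fun i _ => integrable_kernel B hK _ y,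
      ← integral_sub (integrable_kernel B hK f y)
        (integrable_finsetSum _ fun i _ => integrable_kernel B hK _ y)]
    simp [oneSubLaplacian, map_sub, map_sum]
  rw [kernel_helmholtz, kernel_oneSubLaplacian, add_smul, one_smul]
  abel

theorem ip_self_nonneg (y : Fin m → ℝ) : 0 ≤ ip y y :=
  Finset.sum_nonneg fun i _ => mul_self_nonneg (y i)

theorem norm_le_one_add_ip_self (y : Fin m → ℝ) : ‖y‖ ≤ 1 + ip y y := by
  refine (pi_norm_le_iff_of_nonneg (by linarith [ip_self_nonneg y])).2 fun i => ?_
  have sq_le : y i * y i ≤ ip y y :=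
    Finset.single_le_sum (f := fun i => y i * y i) (fun j _ => mul_self_nonneg (y j))
      (Finset.mem_univ i)
  rw [Real.norm_eq_abs]
  nlinarith [abs_mul_abs_self (y i), sq_nonneg (|y i| - 1)]

theorem exists_seminormBounded_kernelIntegral_div (B : G →L[ℝ] F →L[ℝ] H)
    {K : VectorPair m → G} (hK : K.HasTemperateGrowth) :
    ∃ N : ℕ, SeminormBounded fun (y : Fin m → ℝ) (f : 𝓢(Fin m → ℝ, F)) =>
      ‖kernelIntegral volume B K f y‖ / (1 + ip y y) ^ N := by
  obtain ⟨N, hN⟩ := exists_seminormBounded_kernelIntegral (μ := volume) (F := F) B hK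
  refine ⟨N, (hN.const_mul (c := 2 ^ N) (by positivity)).mono fun y f => ?_⟩
  have hpos : 0 < 1 + ip y y := by linarith [ip_self_nonneg y]
  rw [← mul_div_assoc, div_le_div_iff₀ (by positivity) (by positivity)]
  calc ‖kernelIntegral volume B K f y‖ * (1 + ‖y‖) ^ N
      ≤ ‖kernelIntegral volume B K f y‖ * (2 * (1 + ip y y)) ^ N := by
        gcongr; linarith [norm_le_one_add_ip_self y, ip_self_nonneg y]
    _ = 2 ^ N * ‖kernelIntegral volume B K f y‖ * (1 + ip y y) ^ N := by rw [mul_pow]; ring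

theorem one_add_ip_self_mul_norm_kernelIntegral_le (B : G →L[ℝ] F →L[ℝ] H)
    {K : VectorPair m → G} (hK : K.HasTemperateGrowth) (f : 𝓢(Fin m → ℝ, F)) (y : Fin m → ℝ) :
    (1 + ip y y) * ‖kernelIntegral volume B K f y‖
      ≤ ‖kernelIntegral volume B (helmholtz K) f y‖
        + ‖kernelIntegral volume B K (oneSubLaplacian m F f) y‖ := by
  refine le_trans (le_of_eq ?_) (norm_add_le _ _)
  rw [kernelIntegral_helmholtz B hK, norm_smul,
    Real.norm_of_nonneg (by linarith [ip_self_nonneg y])]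

theorem seminormBounded_pow_mul_kernelIntegral_of_helmholtz (B : G →L[ℝ] F →L[ℝ] H)
    {K : VectorPair m → G} (hK : K.HasTemperateGrowth)
    (hL : ∀ p : ℕ, SeminormBounded fun (y : Fin m → ℝ) (f : 𝓢(Fin m → ℝ, F)) =>
      (1 + ip y y) ^ p * ‖kernelIntegral volume B (helmholtz K) f y‖) (p : ℕ) :
    SeminormBounded fun (y : Fin m → ℝ) (f : 𝓢(Fin m → ℝ, F)) =>
      (1 + ip y y) ^ p * ‖kernelIntegral volume B K f y‖ := by
  obtain ⟨N, hN⟩ := exists_seminormBounded_kernelIntegral_div (F := F) B hK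
  have one_le (y : Fin m → ℝ) : 1 ≤ 1 + ip y y := by linarith [ip_self_nonneg y]
  suffices gain : ∀ p : ℕ, SeminormBounded fun (y : Fin m → ℝ) (f : 𝓢(Fin m → ℝ, F)) =>
      (1 + ip y y) ^ p * (‖kernelIntegral volume B K f y‖ / (1 + ip y y) ^ N) by
    refine (gain (p + N)).mono fun y f => le_of_eq ?_
    have := (one_le y).trans_lt' zero_lt_one
    field_simp
    ring
  intro p
  induction p with
  | zero => simpa using hN
  | succ p ih =>
    refine ((hL p).add (ih.comp_clm (oneSubLaplacian m F))).mono fun y f => ?_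
    have hpos := (one_le y).trans_lt' zero_lt_one
    set r := 1 + ip y y
    calc r ^ (p + 1) * (‖kernelIntegral volume B K f y‖ / r ^ N)
        = r ^ p * ((r * ‖kernelIntegral volume B K f y‖) / r ^ N) := by ring
      _ ≤ r ^ p * ((‖kernelIntegral volume B (helmholtz K) f y‖
            + ‖kernelIntegral volume B K (oneSubLaplacian m F f) y‖) / r ^ N) := by
          gcongr; exact one_add_ip_self_mul_norm_kernelIntegral_le B hK f y
      _ ≤ r ^ p * (‖kernelIntegral volume B (helmholtz K) f y‖
            + ‖kernelIntegral volume B K (oneSubLaplacian m F f) y‖ / r ^ N) := by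
          rw [add_div]
          gcongr
          exact div_le_self (norm_nonneg _) (one_le_pow₀ (one_le y))
      _ = _ := mul_add _ _ _

theorem HelmholtzNilpotent.seminormBounded_pow_mul_kernelIntegral {K : VectorPair m → G}
    (hK : HelmholtzNilpotent K) (B : G →L[ℝ] F →L[ℝ] H) (p : ℕ) :
    SeminormBounded fun (y : Fin m → ℝ) (f : 𝓢(Fin m → ℝ, F)) =>
      (1 + ip y y) ^ p * ‖kernelIntegral volume B K f y‖ := by
  induction hK generalizing p with
  | zero => simpa [kernelIntegral] using seminormBounded_zero
  | step hK _ ih => exact seminormBounded_pow_mul_kernelIntegral_of_helmholtz B hK ih p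

theorem HelmholtzNilpotent.seminormBounded_pow_mul_iteratedFDeriv {K : VectorPair m → G}
    (hK : HelmholtzNilpotent K) (B : G →L[ℝ] F →L[ℝ] H) (p n : ℕ) :
    SeminormBounded fun (y : Fin m → ℝ) (f : 𝓢(Fin m → ℝ, F)) =>
      (1 + ip y y) ^ p * ‖iteratedFDeriv ℝ n (kernelIntegral volume B K f) y‖ := by
  induction n generalizing G H with
  | zero => simpa using hK.seminormBounded_pow_mul_kernelIntegral B p
  | succ n ih =>
    simpa only [← norm_iteratedFDeriv_fderiv, fderiv_kernelIntegral B hK.hasTemperateGrowth]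
      using ih hK.fderivSnd (B.precompL _)

theorem HelmholtzNilpotent.exists_clm {K : VectorPair m → G} (hK : HelmholtzNilpotent K)
    (B : G →L[ℝ] F →L[ℝ] H) :
    ∃ T : 𝓢(Fin m → ℝ, F) →L[ℝ] 𝓢(Fin m → ℝ, H), ∀ f y, T f y = ∫ x, B (K (x, y)) (f x) := by
  refine ⟨SchwartzMap.mkCLM (𝕜 := ℝ) (fun f => kernelIntegral volume B K f) (fun f g y => ?_)
    (fun a f y => ?_) (fun f => ?_) ?_, fun f y => rfl⟩
  · simpa [kernelIntegral] using integral_add (integrable_kernel B hK.hasTemperateGrowth f y)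
      (integrable_kernel B hK.hasTemperateGrowth g y)
  · simp [kernelIntegral, integral_smul]
  · exact contDiff_infty.2 fun n => contDiff_kernelIntegral n B hK.hasTemperateGrowth f
  · rintro ⟨p, n⟩
    obtain ⟨q, hq, hle⟩ := hK.seminormBounded_pow_mul_iteratedFDeriv B p n
    obtain ⟨s, C, -, hqC⟩ := Seminorm.bound_of_continuous
      (schwartz_withSeminorms ℝ (Fin m → ℝ) F) q hq
    refine ⟨s, C, C.2, fun f y => le_trans ?_ ((hle y f).trans (hqC f))⟩
    dsimp only
    gcongr
    exact norm_le_one_add_ip_self y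

end RapidDecay

section PowerSeries

theorem hasDerivAt_tsum_mul_pow {c : ℕ → ℝ} (hc : ∀ w, Summable fun j => c j * w ^ j)
    (hc' : ∀ w, Summable fun j : ℕ => (j + 1) * c (j + 1) * w ^ j) (w : ℝ) :
    HasDerivAt (fun w => ∑' j, c j * w ^ j) (∑' j : ℕ, (j + 1) * c (j + 1) * w ^ j) w := by
  have split_zero : (fun w => ∑' j, c j * w ^ j) = fun w => c 0 + ∑' j, c (j + 1) * w ^ (j + 1) :=
    funext fun w => by rw [(hc w).tsum_eq_zero_add, pow_zero, mul_one]
  have mem_ball : w ∈ Metric.ball (0 : ℝ) (|w| + 1) := by simp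
  rw [split_zero]
  refine HasDerivAt.const_add (c 0) <| hasDerivAt_tsum_of_isPreconnected
    (g := fun j w => c (j + 1) * w ^ (j + 1)) (g' := fun j w => (j + 1) * c (j + 1) * w ^ j)
    (hc' (|w| + 1)).norm Metric.isOpen_ball (convex_ball (0 : ℝ) (|w| + 1)).isPreconnected
    (fun j v _ => ?_)
    (fun j v hv => ?_) mem_ball ((summable_nat_add_iff 1).2 (hc w)) mem_ball
  · refine ((hasDerivAt_pow (j + 1) v).const_mul (c (j + 1))).congr_deriv ?_
    push_cast [Nat.add_sub_cancel]
    ring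
  · have abs_le : |v| ≤ |w| + 1 := (mem_ball_zero_iff.1 hv).le
    simp only [norm_mul, norm_pow, Real.norm_eq_abs]
    exact mul_le_mul_of_nonneg_left
      (pow_le_pow_left₀ (abs_nonneg v) (abs_le.trans (le_abs_self _)) j) (by positivity)

end PowerSeries

section Bessel

/-- The Taylor coefficients of `besselSeries a`. -/
def besselCoeff (a : ℝ) (j : ℕ) : ℝ :=
  (-1 / 4) ^ j / (j.factorial * Real.Gamma (j + a + 1) * 2 ^ a)

/-- The function `φ_a` with `φ_a(t²) = t^{-a} J_a(t)`. In the variable `t²` it is entire, and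
differentiation and the Bessel equation become shifts of the order `a`. -/
def besselSeries (a w : ℝ) : ℝ := ∑' j, besselCoeff a j * w ^ j

theorem besselJt_eq_besselSeries (a t : ℝ) : besselJt a t = besselSeries a (t ^ 2) := by
  refine tsum_congr fun j => ?_
  have pow_eq : (-1 : ℝ) ^ j * (t / 2) ^ (2 * j) = (-1 / 4) ^ j * (t ^ 2) ^ j := by
    rw [pow_mul, ← mul_pow, ← mul_pow]
    ring
  rw [pow_eq, besselCoeff]
  ring

-- At the poles both sides vanish, because there `Real.Gamma` has the value `0`.
theorem inv_Gamma_eq_mul_inv_Gamma_add_one (s : ℝ) :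
    (Real.Gamma s)⁻¹ = s * (Real.Gamma (s + 1))⁻¹ := by
  rcases eq_or_ne s 0 with rfl | hs
  · simp
  · rw [Real.Gamma_add_one hs, mul_inv, mul_inv_cancel_left₀ hs]

theorem succ_mul_besselCoeff_succ (a : ℝ) (j : ℕ) :
    (j + 1) * besselCoeff a (j + 1) = -(1 / 2) * besselCoeff (a + 1) j := by
  have shift : ((j + 1 : ℕ) : ℝ) + a + 1 = j + (a + 1) + 1 := by push_cast; ring
  have hj : (j : ℝ) + 1 ≠ 0 := by positivity
  simp only [besselCoeff, div_eq_mul_inv, mul_inv]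
  rw [shift, Real.rpow_add_one two_ne_zero, Nat.factorial_succ, pow_succ]
  push_cast
  field_simp
  norm_num

theorem besselCoeff_eq_mul_besselCoeff_add_one (a : ℝ) (j : ℕ) :
    besselCoeff a j = 2 * (j + a + 1) * besselCoeff (a + 1) j := by
  simp only [besselCoeff, div_eq_mul_inv, mul_inv, Real.rpow_add_one two_ne_zero]
  rw [inv_Gamma_eq_mul_inv_Gamma_add_one, ← add_assoc (j : ℝ) a 1]
  ring

theorem summable_besselCoeff_mul_pow (a w : ℝ) : Summable fun j => besselCoeff a j * w ^ j := by
  refine summable_of_ratio_norm_eventually_le (r := 1 / 2) (by norm_num) ?_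
  filter_upwards [eventually_ge_atTop ⌈|a|⌉₊, eventually_ge_atTop ⌈|w|⌉₊] with j hja hjw
  have ha : 1 ≤ j + a + 1 := by linarith [Nat.ceil_le.1 hja, neg_abs_le a]
  have hw : |w| ≤ j := Nat.ceil_le.1 hjw
  have ratio : besselCoeff a j = -4 * (j + a + 1) * ((j + 1) * besselCoeff a (j + 1)) := by
    rw [besselCoeff_eq_mul_besselCoeff_add_one, succ_mul_besselCoeff_succ]
    ring
  have growth : 2 * |w| ≤ 4 * (j + a + 1) * (j + 1) := by nlinarith [abs_nonneg w]
  rw [ratio]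
  simp only [norm_mul, norm_pow, norm_neg, Real.norm_eq_abs, pow_succ]
  rw [abs_of_pos (by positivity : (0 : ℝ) < j + 1), abs_of_pos (by linarith : 0 < j + a + 1),
    abs_of_pos (by norm_num : (0 : ℝ) < 4)]
  calc |besselCoeff a (j + 1)| * (|w| ^ j * |w|)
      = 1 / 2 * (2 * |w|) * (|besselCoeff a (j + 1)| * |w| ^ j) := by ring
    _ ≤ 1 / 2 * (4 * (j + a + 1) * (j + 1)) * (|besselCoeff a (j + 1)| * |w| ^ j) := by gcongr
    _ = _ := by ring

theorem hasDerivAt_besselSeries (a w : ℝ) :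
    HasDerivAt (besselSeries a) (-(1 / 2) * besselSeries (a + 1) w) w := by
  have hsum (w : ℝ) : Summable fun j : ℕ => (j + 1) * besselCoeff a (j + 1) * w ^ j := by
    simpa only [succ_mul_besselCoeff_succ, mul_assoc]
      using (summable_besselCoeff_mul_pow (a + 1) w).mul_left (-(1 / 2))
  refine (hasDerivAt_tsum_mul_pow (summable_besselCoeff_mul_pow a) hsum w).congr_deriv ?_
  simp only [succ_mul_besselCoeff_succ, mul_assoc, tsum_mul_left, besselSeries]

theorem mul_besselSeries_add_two (a w : ℝ) :
    w * besselSeries (a + 2) w = 2 * (a + 1) * besselSeries (a + 1) w - besselSeries a w := by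
  have hsum₁ := (summable_besselCoeff_mul_pow (a + 1) w).mul_left (2 * (a + 1))
  have hsum₀ := summable_besselCoeff_mul_pow a w
  have coeff_zero :
      2 * (a + 1) * (besselCoeff (a + 1) 0 * w ^ 0) - besselCoeff a 0 * w ^ 0 = 0 := by
    rw [besselCoeff_eq_mul_besselCoeff_add_one a]
    push_cast
    ring
  have coeff_succ (j : ℕ) : besselCoeff (a + 2) j
      = 2 * (a + 1) * besselCoeff (a + 1) (j + 1) - besselCoeff a (j + 1) := by
    have succ := succ_mul_besselCoeff_succ (a + 1) j
    rw [add_assoc, one_add_one_eq_two] at succ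
    rw [besselCoeff_eq_mul_besselCoeff_add_one a]
    push_cast
    linear_combination 2 * succ
  simp only [besselSeries]
  rw [← tsum_mul_left, ← tsum_mul_left, ← hsum₁.tsum_sub hsum₀, (hsum₁.sub hsum₀).tsum_eq_zero_add,
    coeff_zero, zero_add]
  refine tsum_congr fun j => ?_
  rw [coeff_succ]
  ring

theorem abs_besselSeries_le {a : ℝ} (ha : -1 / 2 ≤ a) {w : ℝ} (hw : 0 ≤ w) :
    |besselSeries a w| ≤ |besselSeries a 0| := by
  let energy (w : ℝ) : ℝ := besselSeries a w ^ 2 + w * besselSeries (a + 1) w ^ 2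
  have hasDerivAt_energy (w : ℝ) :
      HasDerivAt energy (-(2 * a + 1) * besselSeries (a + 1) w ^ 2) w := by
    refine (((hasDerivAt_besselSeries a w).fun_pow 2).fun_add ((hasDerivAt_id' w).fun_mul
      ((hasDerivAt_besselSeries (a + 1) w).fun_pow 2))).congr_deriv ?_
    rw [add_assoc a, one_add_one_eq_two]
    push_cast
    linear_combination -besselSeries (a + 1) w * mul_besselSeries_add_two a w
  have energy_antitone : Antitone energy :=
    antitone_of_hasDerivAt_nonpos hasDerivAt_energy fun w =>
      mul_nonpos_of_nonpos_of_nonneg (by linarith) (sq_nonneg _)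
  refine sq_le_sq.1 ?_
  calc besselSeries a w ^ 2 ≤ energy w := le_add_of_nonneg_right (by positivity)
    _ ≤ energy 0 := energy_antitone hw
    _ = besselSeries a 0 ^ 2 := by simp [energy]

theorem iteratedDeriv_besselSeries (a : ℝ) (n : ℕ) :
    iteratedDeriv n (besselSeries a) = fun w => (-(1 / 2)) ^ n * besselSeries (a + n) w := by
  induction n with
  | zero => simp
  | succ n ih =>
    rw [iteratedDeriv_succ, ih]
    funext w
    rw [((hasDerivAt_besselSeries (a + n) w).const_mul _).deriv, pow_succ, Nat.cast_succ, add_assoc]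
    ring

theorem contDiff_besselSeries (a : ℝ) : ContDiff ℝ ((⊤ : ℕ∞) : WithTop ℕ∞) (besselSeries a) := by
  refine contDiff_of_differentiable_iteratedDeriv fun n _ => ?_
  rw [iteratedDeriv_besselSeries]
  exact fun w => ((hasDerivAt_besselSeries (a + n) w).const_mul _).differentiableAt

end Bessel

section BoundedDerivatives

variable {E : Type*} [NormedAddCommGroup E] [NormedSpace ℝ E]

theorem hasTemperateGrowth_comp_of_iteratedDeriv_le {φ : ℝ → ℝ} {s : Set ℝ} {w : E → ℝ}
    (hφ : ContDiff ℝ ((⊤ : ℕ∞) : WithTop ℕ∞) φ) (hs : UniqueDiffOn ℝ s)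
    (hbound : ∀ n, ∃ C, ∀ t ∈ s, |iteratedDeriv n φ t| ≤ C)
    (hw : w.HasTemperateGrowth) (hws : ∀ z, w z ∈ s) : (fun z => φ (w z)).HasTemperateGrowth := by
  choose C hC using hbound
  refine HasTemperateGrowth.comp' (g := φ) (Set.range_subset_iff.2 hws) hs hφ.contDiffOn
    (fun N => ⟨0, ∑ n ∈ Finset.range (N + 1), |C n|, by positivity, fun n hn t ht => ?_⟩) hw
  rw [norm_iteratedFDerivWithin_eq_norm_iteratedDerivWithin,
    iteratedDerivWithin_eq_iteratedDeriv hs (hφ.contDiffAt.of_le (mod_cast le_top)) ht,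
    pow_zero, mul_one]
  exact (hC n t ht).trans <| (le_abs_self _).trans <|
    Finset.single_le_sum (f := fun n => |C n|) (fun _ _ => abs_nonneg _)
      (Finset.mem_range.2 (Nat.lt_succ_of_le hn))

theorem hasTemperateGrowth_besselSeries_comp {a : ℝ} (ha : -1 / 2 ≤ a) {w : E → ℝ}
    (hw : w.HasTemperateGrowth) (hw₀ : ∀ z, 0 ≤ w z) :
    (fun z => besselSeries a (w z)).HasTemperateGrowth := by
  refine hasTemperateGrowth_comp_of_iteratedDeriv_le (contDiff_besselSeries a)
    (uniqueDiffOn_Ici 0) (fun n => ⟨|(-(1 / 2)) ^ n| * |besselSeries (a + n) 0|, fun t ht => ?_⟩)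
    hw hw₀
  rw [iteratedDeriv_besselSeries, abs_mul]
  exact mul_le_mul_of_nonneg_left
    (abs_besselSeries_le (ha.trans (le_add_of_nonneg_right n.cast_nonneg)) ht) (abs_nonneg _)

theorem hasTemperateGrowth_cos_comp {w : E → ℝ} (hw : w.HasTemperateGrowth) :
    (fun z => Real.cos (w z)).HasTemperateGrowth :=
  hasTemperateGrowth_comp_of_iteratedDeriv_le Real.contDiff_cos uniqueDiffOn_univ
    (fun n => ⟨1, fun t _ => Real.abs_iteratedDeriv_cos_le_one n t⟩) hw fun _ => trivial

theorem hasTemperateGrowth_sin_comp {w : E → ℝ} (hw : w.HasTemperateGrowth) :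
    (fun z => Real.sin (w z)).HasTemperateGrowth :=
  hasTemperateGrowth_comp_of_iteratedDeriv_le Real.contDiff_sin uniqueDiffOn_univ
    (fun n => ⟨1, fun t _ => Real.abs_iteratedDeriv_sin_le_one n t⟩) hw fun _ => trivial

end BoundedDerivatives

section GramDeterminant

theorem HasXDeriv.mul {i : Fin m} {c c' d d' : VectorPair m → ℝ} (hc : HasXDeriv i c c')
    (hd : HasXDeriv i d d') : HasXDeriv i (fun z => c z * d z) (fun z => c z * d' z + c' z * d z) :=
  hc.smul hd

theorem HasXDeriv.sum {ι : Type*} {i : Fin m} {s : Finset ι} {c c' : ι → VectorPair m → ℝ}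
    (hc : ∀ j ∈ s, HasXDeriv i (c j) (c' j)) :
    HasXDeriv i (fun z => ∑ j ∈ s, c j z) (fun z => ∑ j ∈ s, c' j z) :=
  fun z => HasDerivAt.fun_sum fun j hj => hc j hj z

theorem HasXDeriv.congr {i : Fin m} {c c' d' : VectorPair m → ℝ} (hc : HasXDeriv i c c')
    (h : ∀ z, c' z = d' z) : HasXDeriv i c d' :=
  funext h ▸ hc

theorem hasXDeriv_fst (i j : Fin m) :
    HasXDeriv i (fun z => z.1 j) (fun _ => (Pi.single i 1 : Fin m → ℝ) j) :=
  fun z => by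
    simpa [HasLineDerivAt] using
      ((hasDerivAt_id (0 : ℝ)).mul_const ((Pi.single i 1 : Fin m → ℝ) j)).const_add (z.1 j)

theorem hasXDeriv_ip_fst_snd (i : Fin m) : HasXDeriv i (fun z => ip z.1 z.2) (fun z => z.2 i) :=
  (HasXDeriv.sum fun j _ => (hasXDeriv_fst i j).mul (hasXDeriv_snd i fun y => y j)).congr
    fun z => by simp [Pi.single_apply]

theorem hasXDeriv_ip_fst_fst (i : Fin m) :
    HasXDeriv i (fun z => ip z.1 z.1) (fun z => 2 * z.1 i) :=
  (HasXDeriv.sum fun j _ => (hasXDeriv_fst i j).mul (hasXDeriv_fst i j)).congr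
    fun z => by simp [Pi.single_apply, Finset.sum_add_distrib, two_mul]

@[fun_prop]
theorem hasTemperateGrowth_ip_fst_fst :
    (fun z : VectorPair m => ip z.1 z.1).HasTemperateGrowth := by
  unfold ip; fun_prop

@[fun_prop]
theorem hasTemperateGrowth_ip_fst_snd :
    (fun z : VectorPair m => ip z.1 z.2).HasTemperateGrowth := by
  unfold ip; fun_prop

/-- The Gram determinant `|x|²|y|² - ⟨x,y⟩²`, written `t²` in the closed form of the kernel. -/
def gramDet (z : VectorPair m) : ℝ := ip z.1 z.1 * ip z.2 z.2 - ip z.1 z.2 ^ 2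

/-- The `i`-th component of half the `x`-gradient of `gramDet`. -/
def gramGrad (i : Fin m) (z : VectorPair m) : ℝ := ip z.2 z.2 * z.1 i - ip z.1 z.2 * z.2 i

@[fun_prop]
theorem hasTemperateGrowth_gramDet : (gramDet (m := m)).HasTemperateGrowth := by
  unfold gramDet; fun_prop

theorem gramDet_nonneg (z : VectorPair m) : 0 ≤ gramDet z := by
  have cauchy_schwarz := Finset.sum_mul_sq_le_sq_mul_sq Finset.univ z.1 z.2
  simp only [sq (z.1 _), sq (z.2 _)] at cauchy_schwarz
  exact sub_nonneg.2 cauchy_schwarz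

theorem hasXDeriv_gramDet (i : Fin m) : HasXDeriv i gramDet (fun z => 2 * gramGrad i z) := by
  have hs := hasXDeriv_ip_fst_snd i
  have hsub := ((hasXDeriv_ip_fst_fst i).mul (hasXDeriv_snd i fun y => ip y y)).add
    ((hasXDeriv_snd i fun _ => -1).mul (hs.mul hs))
  have gramDet_eq : gramDet (m := m) = fun z =>
      ip z.1 z.1 * ip z.2 z.2 + -1 * (ip z.1 z.2 * ip z.1 z.2) :=
    funext fun z => by rw [gramDet]; ring
  rw [gramDet_eq]
  exact hsub.congr fun z => by rw [gramGrad]; ring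

theorem hasXDeriv_gramGrad (i : Fin m) :
    HasXDeriv i (gramGrad i) (fun z => ip z.2 z.2 - z.2 i * z.2 i) := by
  have hsub := ((hasXDeriv_snd i fun y => ip y y).mul (hasXDeriv_fst i i)).add
    ((hasXDeriv_snd i fun y => -y i).mul (hasXDeriv_ip_fst_snd i))
  have gramGrad_eq : gramGrad i = fun z : VectorPair m =>
      ip z.2 z.2 * z.1 i + -z.2 i * ip z.1 z.2 :=
    funext fun z => by rw [gramGrad]; ring
  rw [gramGrad_eq]
  exact hsub.congr fun z => by rw [Pi.single_eq_same]; ring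

theorem sum_mul_gramGrad (v : Fin m → ℝ) (z : VectorPair m) :
    ∑ i, v i * gramGrad i z
      = ip z.2 z.2 * ∑ i, z.1 i * v i - ip z.1 z.2 * ∑ i, z.2 i * v i := by
  simp only [gramGrad, mul_sub, Finset.sum_sub_distrib, Finset.mul_sum]
  congr 1 <;> exact Finset.sum_congr rfl fun i _ => by ring

theorem sum_snd_mul_gramGrad (z : VectorPair m) : ∑ i, z.2 i * gramGrad i z = 0 := by
  rw [sum_mul_gramGrad]
  exact sub_eq_zero.2 (mul_comm _ _)

theorem sum_gramGrad_mul_self (z : VectorPair m) :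
    ∑ i, gramGrad i z * gramGrad i z = ip z.2 z.2 * gramDet z := by
  have sum_fst : ∑ i, z.1 i * gramGrad i z = gramDet z := by
    rw [sum_mul_gramGrad, gramDet, sq, mul_comm (ip z.1 z.1)]
    simp only [ip, mul_comm (z.2 _)]
  rw [sum_mul_gramGrad, sum_fst, sum_snd_mul_gramGrad, mul_zero, sub_zero]

/-- The factor `J̃_a(t)` of the kernel as a function of `(x, y)`. -/
def besselGram (a : ℝ) (z : VectorPair m) : ℝ := besselSeries a (gramDet z)

theorem besselJt_sqrt_gramDet (a : ℝ) (z : VectorPair m) :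
    besselJt a (Real.sqrt (gramDet z)) = besselGram a z := by
  rw [besselJt_eq_besselSeries, Real.sq_sqrt (gramDet_nonneg z), besselGram]

theorem hasTemperateGrowth_besselGram {a : ℝ} (ha : -1 / 2 ≤ a) :
    (besselGram (m := m) a).HasTemperateGrowth :=
  hasTemperateGrowth_besselSeries_comp ha hasTemperateGrowth_gramDet gramDet_nonneg

theorem hasXDeriv_besselGram (a : ℝ) (i : Fin m) :
    HasXDeriv i (besselGram a) (fun z => -besselGram (a + 1) z * gramGrad i z) :=
  (HasXDeriv.comp_hasDerivAt (hasDerivAt_besselSeries a) (hasXDeriv_gramDet i)).congr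
    fun z => by rw [besselGram]; ring

theorem helmholtz_besselGram (a : ℝ) : helmholtz (besselGram (m := m) a)
    = fun z => (2 * a + 3 - m) * (ip z.2 z.2 * besselGram (a + 1) z) := by
  rw [helmholtz_eq_of_hasXDeriv (hasXDeriv_besselGram a) fun i =>
    ((hasXDeriv_besselGram (a + 1) i).clm_comp (-ContinuousLinearMap.id ℝ ℝ)).mul
      (hasXDeriv_gramGrad i)]
  funext z
  have recurrence := mul_besselSeries_add_two a (gramDet z)
  have sum_eq : ∑ i, (-besselGram (a + 1) z * (ip z.2 z.2 - z.2 i * z.2 i)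
      + -(-besselGram (a + 1 + 1) z * gramGrad i z) * gramGrad i z)
      = -besselGram (a + 1) z * (m * ip z.2 z.2 - ip z.2 z.2)
        + besselGram (a + 2) z * (ip z.2 z.2 * gramDet z) := by
    rw [← sum_gramGrad_mul_self]
    simp only [neg_mul, neg_neg, mul_assoc, Finset.sum_add_distrib, Finset.sum_neg_distrib,
      ← Finset.mul_sum, Finset.sum_sub_distrib, Finset.sum_const, Finset.card_univ,
      Fintype.card_fin, nsmul_eq_mul, add_assoc a, one_add_one_eq_two]
    rfl
  refine (congrArg (· + ip z.2 z.2 * besselGram a z) sum_eq).trans ?_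
  simp only [besselGram]
  linear_combination ip z.2 z.2 * recurrence

end GramDeterminant

section TransverseHarmonic

/-- Functions that, as functions of `x`, are harmonic, homogeneous of degree `c`, and constant in
the direction of `y`. The factors `1` and `x_p y_q - x_q y_p` of the kernel are of this kind. -/
structure TransverseHarmonic (c : ℝ) (h : VectorPair m → ℝ) : Prop where
  hasTemperateGrowth : h.HasTemperateGrowth
  sum_xDeriv_xDeriv : ∀ z, ∑ i, xDeriv i (xDeriv i h) z = 0
  sum_snd_mul_xDeriv : ∀ z, ∑ i, z.2 i * xDeriv i h z = 0
  sum_fst_mul_xDeriv : ∀ z, ∑ i, z.1 i * xDeriv i h z = c * h z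

namespace TransverseHarmonic

variable {c : ℝ} {h : VectorPair m → ℝ}

theorem hasXDeriv_mul_pow (hh : TransverseHarmonic c h) (k : ℕ) (i : Fin m) :
    HasXDeriv i (fun z => h z * ip z.1 z.2 ^ k)
      (fun z => h z * (k * ip z.1 z.2 ^ (k - 1) * z.2 i) + xDeriv i h z * ip z.1 z.2 ^ k) :=
  (hasXDeriv_xDeriv hh.hasTemperateGrowth i).mul
    (HasXDeriv.comp_hasDerivAt (hasDerivAt_pow k) (hasXDeriv_ip_fst_snd i))

theorem sum_xDeriv_xDeriv_mul_pow (hh : TransverseHarmonic c h) (k : ℕ) (z : VectorPair m) :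
    ∑ i, xDeriv i (xDeriv i fun z => h z * ip z.1 z.2 ^ k) z
      = k * (k - 1 : ℕ) * (ip z.2 z.2 * (h z * ip z.1 z.2 ^ (k - 1 - 1))) := by
  have hpow (k : ℕ) (i : Fin m) :=
    HasXDeriv.comp_hasDerivAt (hasDerivAt_pow k) (hasXDeriv_ip_fst_snd i)
  have hsecond (i : Fin m) :=
    ((hasXDeriv_xDeriv hh.hasTemperateGrowth i).mul
      (((hasXDeriv_snd i fun _ => (k : ℝ)).mul (hpow (k - 1) i)).mul
        (hasXDeriv_snd i fun y => y i))).add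
    ((hasXDeriv_xDeriv (hasTemperateGrowth_xDeriv hh.hasTemperateGrowth i) i).mul (hpow k i))
  simp only [(hh.hasXDeriv_mul_pow k _).xDeriv_eq, (hsecond _).xDeriv_eq]
  have collect (i : Fin m) : h z * (k * ip z.1 z.2 ^ (k - 1) * 0
        + (k * ((k - 1 : ℕ) * ip z.1 z.2 ^ (k - 1 - 1) * z.2 i)
          + 0 * ip z.1 z.2 ^ (k - 1)) * z.2 i)
        + xDeriv i h z * (k * ip z.1 z.2 ^ (k - 1) * z.2 i)
        + (xDeriv i h z * (k * ip z.1 z.2 ^ (k - 1) * z.2 i)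
          + xDeriv i (xDeriv i h) z * ip z.1 z.2 ^ k)
      = h z * k * (k - 1 : ℕ) * ip z.1 z.2 ^ (k - 1 - 1) * (z.2 i * z.2 i)
        + 2 * k * ip z.1 z.2 ^ (k - 1) * (z.2 i * xDeriv i h z)
        + ip z.1 z.2 ^ k * xDeriv i (xDeriv i h) z := by ring
  simp only [collect, Finset.sum_add_distrib, ← Finset.mul_sum, hh.sum_snd_mul_xDeriv,
    hh.sum_xDeriv_xDeriv]
  rw [← ip]
  ring

theorem sum_xDeriv_mul_pow_mul_gramGrad (hh : TransverseHarmonic c h) (k : ℕ)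
    (z : VectorPair m) :
    ∑ i, xDeriv i (fun z => h z * ip z.1 z.2 ^ k) z * gramGrad i z
      = c * (ip z.2 z.2 * (h z * ip z.1 z.2 ^ k)) := by
  have collect (i : Fin m) : (h z * (k * ip z.1 z.2 ^ (k - 1) * z.2 i)
        + xDeriv i h z * ip z.1 z.2 ^ k) * gramGrad i z
      = h z * k * ip z.1 z.2 ^ (k - 1) * (z.2 i * gramGrad i z)
        + ip z.1 z.2 ^ k * (xDeriv i h z * gramGrad i z) := by ring
  simp only [(hh.hasXDeriv_mul_pow k _).xDeriv_eq, collect, Finset.sum_add_distrib,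
    ← Finset.mul_sum, sum_snd_mul_gramGrad, sum_mul_gramGrad, hh.sum_snd_mul_xDeriv,
    hh.sum_fst_mul_xDeriv]
  ring

theorem hasTemperateGrowth_mul_pow (hh : TransverseHarmonic c h) (k : ℕ) :
    (fun z => h z * ip z.1 z.2 ^ k).HasTemperateGrowth := by
  have := hh.hasTemperateGrowth
  fun_prop

theorem helmholtz_mul_pow_mul_besselGram (hh : TransverseHarmonic c h) (k : ℕ) {a : ℝ}
    (ha : -1 / 2 ≤ a) :
    helmholtz (fun z => h z * ip z.1 z.2 ^ k * besselGram a z)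
      = fun z => (k * (k - 1 : ℕ) : ℝ) •
          ip z.2 z.2 • (h z * ip z.1 z.2 ^ (k - 1 - 1) * besselGram a z)
        + (2 * a + 3 - m - 2 * c) • ip z.2 z.2 • (h z * ip z.1 z.2 ^ k * besselGram (a + 1) z) := by
  refine (helmholtz_smul (hh.hasTemperateGrowth_mul_pow k) (hasTemperateGrowth_besselGram ha)).trans
    (funext fun z => ?_)
  have cross_term : ∑ i, xDeriv i (fun z => h z * ip z.1 z.2 ^ k) z * xDeriv i (besselGram a) z
      = -besselGram (a + 1) z * (c * (ip z.2 z.2 * (h z * ip z.1 z.2 ^ k))) := by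
    rw [← hh.sum_xDeriv_mul_pow_mul_gramGrad, Finset.mul_sum]
    refine Finset.sum_congr rfl fun i _ => ?_
    rw [(hasXDeriv_besselGram a i).xDeriv_eq]
    ring
  simp only [smul_eq_mul, cross_term, helmholtz_besselGram, hh.sum_xDeriv_xDeriv_mul_pow]
  ring

theorem helmholtzNilpotent_of_add_one (hh : TransverseHarmonic c h) {a : ℝ} (ha : -1 / 2 ≤ a)
    (hshift : ∀ k : ℕ, HelmholtzNilpotent fun z =>
      (2 * a + 3 - m - 2 * c) • (h z * ip z.1 z.2 ^ k * besselGram (a + 1) z)) (k : ℕ) :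
    HelmholtzNilpotent fun z => h z * ip z.1 z.2 ^ k * besselGram a z := by
  induction k using Nat.strong_induction_on with
  | _ k ih =>
    refine .step ((hh.hasTemperateGrowth_mul_pow k).mul (hasTemperateGrowth_besselGram ha)) ?_
    rw [hh.helmholtz_mul_pow_mul_besselGram k ha]
    refine .add ?_ ?_
    · rcases k with _ | k
      · simpa using HelmholtzNilpotent.zero
      · exact ((ih (k + 1 - 1 - 1) (by omega)).snd_smul (c := fun y => ip y y)
          (by fun_prop)).const_smul _
    · simpa only [smul_comm (ip _ _)] using
        (hshift k).snd_smul (c := fun y => ip y y) (by fun_prop)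

-- The coefficient `2 a + 3 - m - 2 c` equals `-2 l`, and `a ↦ a + 1` lowers `l` by one.
theorem helmholtzNilpotent (hh : TransverseHarmonic c h) (l k : ℕ) {a : ℝ} (ha : -1 / 2 ≤ a)
    (hal : 2 * a + 3 = m + 2 * c - 2 * l) :
    HelmholtzNilpotent fun z => h z * ip z.1 z.2 ^ k * besselGram a z := by
  induction l generalizing k a with
  | zero =>
    refine hh.helmholtzNilpotent_of_add_one ha (fun k => ?_) k
    have coefficient_eq_zero : 2 * a + 3 - m - 2 * c = 0 := by push_cast at hal; linarith
    simpa [coefficient_eq_zero] using HelmholtzNilpotent.zero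
  | succ l ih =>
    refine hh.helmholtzNilpotent_of_add_one ha (fun k => .const_smul (ih k ?_ ?_) _) k
    · linarith
    · push_cast at hal; linarith

end TransverseHarmonic

theorem transverseHarmonic_one : TransverseHarmonic 0 (fun _ : VectorPair m => 1) := by
  have hone (i : Fin m) := (hasXDeriv_snd i fun _ => (1 : ℝ)).xDeriv_eq
  have hzero (i : Fin m) := (hasXDeriv_snd i fun _ => (0 : ℝ)).xDeriv_eq
  constructor <;> simp [hone, hzero, HasTemperateGrowth.const]

/-- The coefficient of `e_p e_q` in `x ∧ y`. -/
def wedgeCoord (p q : Fin m) (z : VectorPair m) : ℝ := z.1 p * z.2 q - z.1 q * z.2 p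

@[fun_prop]
theorem hasTemperateGrowth_wedgeCoord (p q : Fin m) : (wedgeCoord p q).HasTemperateGrowth := by
  unfold wedgeCoord; fun_prop

theorem hasXDeriv_wedgeCoord (p q i : Fin m) : HasXDeriv i (wedgeCoord p q)
    (fun z => (Pi.single i 1 : Fin m → ℝ) p * z.2 q - (Pi.single i 1 : Fin m → ℝ) q * z.2 p) := by
  have hsub := ((hasXDeriv_fst i p).mul (hasXDeriv_snd i fun y => y q)).add
    ((hasXDeriv_fst i q).mul (hasXDeriv_snd i fun y => -y p))
  have wedgeCoord_eq : wedgeCoord p q = fun z : VectorPair m =>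
      z.1 p * z.2 q + z.1 q * -z.2 p :=
    funext fun z => by rw [wedgeCoord]; ring
  rw [wedgeCoord_eq]
  exact hsub.congr fun z => by ring

theorem xDeriv_xDeriv_wedgeCoord (p q i : Fin m) :
    xDeriv i (xDeriv i (wedgeCoord p q)) = fun _ => 0 := by
  rw [(hasXDeriv_wedgeCoord p q i).xDeriv_eq]
  exact (hasXDeriv_snd i fun y =>
    (Pi.single i 1 : Fin m → ℝ) p * y q - (Pi.single i 1 : Fin m → ℝ) q * y p).xDeriv_eq

theorem transverseHarmonic_wedgeCoord (p q : Fin m) : TransverseHarmonic 1 (wedgeCoord p q) where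
  hasTemperateGrowth := hasTemperateGrowth_wedgeCoord p q
  sum_xDeriv_xDeriv z := by simp [xDeriv_xDeriv_wedgeCoord]
  sum_snd_mul_xDeriv z := by
    simp [(hasXDeriv_wedgeCoord p q _).xDeriv_eq, mul_sub, Finset.sum_sub_distrib, Pi.single_apply,
      mul_comm (z.2 p)]
  sum_fst_mul_xDeriv z := by
    simp [(hasXDeriv_wedgeCoord p q _).xDeriv_eq, mul_sub, Finset.sum_sub_distrib, Pi.single_apply,
      wedgeCoord]

theorem helmholtzNilpotent_comp_wedgeCoord {φ ψ : ℝ → ℝ} (hφ : ∀ t, HasDerivAt φ (ψ t) t)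
    (hψ : ∀ t, HasDerivAt ψ (-φ t) t)
    (hφu : (fun z : VectorPair 2 => φ (wedgeCoord 0 1 z)).HasTemperateGrowth) :
    HelmholtzNilpotent fun z : VectorPair 2 => φ (wedgeCoord 0 1 z) := by
  refine .step hφu ?_
  have hu (i : Fin 2) := hasXDeriv_wedgeCoord 0 1 i
  have hu' (i : Fin 2) := hasXDeriv_snd i fun y =>
    (Pi.single i 1 : Fin 2 → ℝ) 0 * y 1 - (Pi.single i 1 : Fin 2 → ℝ) 1 * y 0
  rw [helmholtz_eq_of_hasXDeriv (fun i => HasXDeriv.comp_hasDerivAt hφ (hu i))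
    fun i => (HasXDeriv.comp_hasDerivAt hψ (hu i)).mul (hu' i)]
  convert HelmholtzNilpotent.zero using 2 with z
  simp only [ip, Fin.sum_univ_two, Pi.single_eq_same, ne_eq, one_ne_zero, zero_ne_one,
    not_false_eq_true, Pi.single_eq_of_ne, smul_eq_mul]
  ring

theorem helmholtzNilpotent_cos_wedgeCoord :
    HelmholtzNilpotent fun z : VectorPair 2 => Real.cos (wedgeCoord 0 1 z) :=
  helmholtzNilpotent_comp_wedgeCoord Real.hasDerivAt_cos (fun t => (Real.hasDerivAt_sin t).neg)
    (hasTemperateGrowth_cos_comp (hasTemperateGrowth_wedgeCoord 0 1))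

theorem helmholtzNilpotent_sin_wedgeCoord :
    HelmholtzNilpotent fun z : VectorPair 2 => Real.sin (wedgeCoord 0 1 z) :=
  helmholtzNilpotent_comp_wedgeCoord Real.hasDerivAt_sin Real.hasDerivAt_cos
    (hasTemperateGrowth_sin_comp (hasTemperateGrowth_wedgeCoord 0 1))

end TransverseHarmonic

section CliffordKernel

theorem Cl.add_mul (a b c : Cl m) : (a + b) * c = a * c + b * c := by
  funext S
  change (∑ T : Finset (Fin m), _ * (a T + b T) * _ : ℂ)
    = (∑ T : Finset (Fin m), _) + ∑ T : Finset (Fin m), _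
  rw [← Finset.sum_add_distrib]
  exact Finset.sum_congr rfl fun T _ => by simp only [coeff]; ring

theorem Cl.mul_add (a b c : Cl m) : a * (b + c) = a * b + a * c := by
  funext S
  change (∑ T : Finset (Fin m), _ * _ * (b _ + c _) : ℂ)
    = (∑ T : Finset (Fin m), _) + ∑ T : Finset (Fin m), _
  rw [← Finset.sum_add_distrib]
  exact Finset.sum_congr rfl fun T _ => by simp only [coeff]; ring

theorem Cl.smul_mul (r : ℝ) (a b : Cl m) : (r • a) * b = r • (a * b) := by
  funext S
  change (∑ T : Finset (Fin m), _ * (r • a T) * _ : ℂ) = r • ∑ T : Finset (Fin m), _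
  rw [Finset.smul_sum]
  exact Finset.sum_congr rfl fun T _ => by simp only [coeff, Complex.real_smul]; ring

theorem Cl.mul_smul (r : ℝ) (a b : Cl m) : a * (r • b) = r • (a * b) := by
  funext S
  change (∑ T : Finset (Fin m), _ * _ * (r • b _) : ℂ) = r • ∑ T : Finset (Fin m), _
  rw [Finset.smul_sum]
  exact Finset.sum_congr rfl fun T _ => by simp only [coeff, Complex.real_smul]; ring

theorem Cl.ofReal_smul (r : ℝ) (a : Cl m) : (r : ℂ) • a = r • a :=
  funext fun S => (Complex.real_smul (x := r) (z := a S)).symm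

instance : FiniteDimensional ℝ (Cl m) :=
  inferInstanceAs (FiniteDimensional ℝ (Finset (Fin m) → ℂ))

variable (m) in
/-- Clifford multiplication as a continuous bilinear map. -/
def cliffordMul : Cl m →L[ℝ] Cl m →L[ℝ] Cl m :=
  LinearMap.toContinuousBilinearMap
    (LinearMap.mk₂ ℝ (· * ·) Cl.add_mul Cl.smul_mul Cl.mul_add Cl.mul_smul)

theorem cliffordMul_apply (a b : Cl m) : cliffordMul m a b = a * b := rfl

theorem HelmholtzNilpotent.smul_const {G : Type} [NormedAddCommGroup G] [NormedSpace ℝ G]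
    {k : VectorPair m → ℝ} (hk : HelmholtzNilpotent k) (a : G) :
    HelmholtzNilpotent fun z => k z • a :=
  hk.clm_comp (ContinuousLinearMap.toSpanSingleton ℝ a)

theorem helmholtzNilpotent_pow_mul_besselGram (l k : ℕ) (hl : 2 * l + 2 ≤ m) :
    HelmholtzNilpotent fun z : VectorPair m =>
      ip z.1 z.2 ^ k * besselGram (((m : ℝ) - 2 * l - 3) / 2) z := by
  have hl' : (2 * l + 2 : ℝ) ≤ m := by exact_mod_cast hl
  simpa only [one_mul] using
    transverseHarmonic_one.helmholtzNilpotent l k (by linarith) (by ring)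

theorem helmholtzNilpotent_wedgeCoord_mul_pow_mul_besselGram (p q : Fin m) (l k : ℕ)
    (hl : 2 * l ≤ m) :
    HelmholtzNilpotent fun z =>
      wedgeCoord p q z * ip z.1 z.2 ^ k * besselGram (((m : ℝ) - 2 * l - 1) / 2) z := by
  have hl' : (2 * l : ℝ) ≤ m := by exact_mod_cast hl
  exact (transverseHarmonic_wedgeCoord p q).helmholtzNilpotent l k (by linarith) (by ring)

theorem helmholtzNilpotent_Astar (hm : 2 < m) :
    HelmholtzNilpotent fun z : VectorPair m => Astar m (ip z.1 z.2) (Real.sqrt (gramDet z)) := by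
  refine .sum _ fun l hl => ?_
  have hl' := Finset.mem_range.1 hl
  convert (helmholtzNilpotent_pow_mul_besselGram (m := m) l (m / 2 - 2 - 2 * l)
    (by omega)).const_smul
    (1 / (2 ^ l * l.factorial) * (Real.Gamma (m / 2) / Real.Gamma (m / 2 - 2 * l - 1)))
    using 2 with z
  rw [besselJt_sqrt_gramDet, smul_eq_mul]
  ring

theorem helmholtzNilpotent_Bstar (hm : 2 ≤ m) :
    HelmholtzNilpotent fun z : VectorPair m => Bstar m (ip z.1 z.2) (Real.sqrt (gramDet z)) := by
  simp only [Bstar, ← Finset.sum_neg_distrib]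
  refine .sum _ fun l hl => ?_
  have hl' := Finset.mem_range.1 hl
  convert (helmholtzNilpotent_pow_mul_besselGram (m := m) l (m / 2 - 1 - 2 * l)
    (by omega)).const_smul
    (-(1 / (2 ^ l * l.factorial) * (Real.Gamma (m / 2) / Real.Gamma (m / 2 - 2 * l))))
    using 2 with z
  rw [besselJt_sqrt_gramDet, smul_eq_mul]
  ring

theorem helmholtzNilpotent_Cstar_mul_wedgeCoord (hm : 2 ≤ m) (p q : Fin m) :
    HelmholtzNilpotent fun z =>
      Cstar m (ip z.1 z.2) (Real.sqrt (gramDet z)) * wedgeCoord p q z := by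
  simp only [Cstar, ← Finset.sum_neg_distrib, Finset.sum_mul]
  refine .sum _ fun l hl => ?_
  have hl' := Finset.mem_range.1 hl
  convert (helmholtzNilpotent_wedgeCoord_mul_pow_mul_besselGram p q l (m / 2 - 1 - 2 * l)
    (by omega)).const_smul
      (-(1 / (2 ^ l * l.factorial) * (Real.Gamma (m / 2) / Real.Gamma (m / 2 - 2 * l))))
    using 2 with z
  rw [besselJt_sqrt_gramDet, smul_eq_mul]
  ring

theorem helmholtzNilpotent_Cstar_smul_wedge (hm : 2 ≤ m) :
    HelmholtzNilpotent fun z : VectorPair m =>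
      Cstar m (ip z.1 z.2) (Real.sqrt (gramDet z)) • wedge m z.1 z.2 := by
  simp only [wedge, Finset.smul_sum]
  refine .sum _ fun p _ => .sum _ fun q _ => ?_
  by_cases hpq : p < q
  · simpa only [if_pos hpq, Cl.ofReal_smul, smul_smul, wedgeCoord] using
      (helmholtzNilpotent_Cstar_mul_wedgeCoord hm p q).smul_const (e m p * e m q)
  · simpa only [if_neg hpq, smul_zero] using HelmholtzNilpotent.zero

theorem helmholtzNilpotent_Kcf_two : HelmholtzNilpotent fun z : VectorPair 2 => Kcf 2 z.1 z.2 := by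
  have sum_eq_wedgeCoord (z : VectorPair 2) : (∑ j : Fin 2, ∑ k : Fin 2,
      if j < k then z.1 j * z.2 k - z.1 k * z.2 j else 0) = wedgeCoord 0 1 z := by
    simp [Fin.sum_univ_two, wedgeCoord]
  simp only [Kcf, lt_irrefl, if_false, sum_eq_wedgeCoord]
  exact (helmholtzNilpotent_cos_wedgeCoord.smul_const _).add
    (helmholtzNilpotent_sin_wedgeCoord.smul_const _)

theorem helmholtzNilpotent_Kcf (hm : 2 ≤ m) :
    HelmholtzNilpotent fun z : VectorPair m => Kcf m z.1 z.2 := by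
  rcases hm.eq_or_lt with rfl | hm
  · exact helmholtzNilpotent_Kcf_two
  · simp only [Kcf, if_pos hm]
    exact ((((helmholtzNilpotent_Astar hm).add (helmholtzNilpotent_Bstar hm.le)).smul_const 1).add
      (helmholtzNilpotent_Cstar_smul_wedge hm.le)).const_smul _

end CliffordKernel

theorem clifford_fourier_continuous_schwartz_general (m : ℕ) (hm : 2 ≤ m) :
    ∃ T : SchwartzMap (Fin m → ℝ) (Cl m) →L[ℝ] SchwartzMap (Fin m → ℝ) (Cl m),
      ∀ (f : SchwartzMap (Fin m → ℝ) (Cl m)) (y : Fin m → ℝ),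
        T f y = ((2*Real.pi) ^ (-(m:ℝ)/2)) • ∫ x : Fin m → ℝ, Kcf m x y * f x := by
  obtain ⟨T, hT⟩ := (helmholtzNilpotent_Kcf hm).exists_clm (cliffordMul m)
  simp only [cliffordMul_apply] at hT
  exact ⟨((2 * Real.pi) ^ (-(m : ℝ) / 2)) • T, fun f y =>
    congrArg (((2 * Real.pi) ^ (-(m : ℝ) / 2)) • ·) (hT f y)⟩

/-- For even `m`, the Clifford-Fourier transform
`F_- f(y) = (2π)^{-m/2} ∫_{ℝ^m} K_-(x,y) f(x) dx`
is a well-defined continuous linear operator of the Schwartz space of Clifford-algebra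
valued functions to itself. -/
theorem clifford_fourier_continuous_schwartz (m : ℕ) (hme : Even m) (hm : 2 ≤ m) :
    ∃ T : SchwartzMap (Fin m → ℝ) (Cl m) →L[ℝ] SchwartzMap (Fin m → ℝ) (Cl m),
      ∀ (f : SchwartzMap (Fin m → ℝ) (Cl m)) (y : Fin m → ℝ),
        T f y = ((2*Real.pi) ^ (-(m:ℝ)/2)) • ∫ x : Fin m → ℝ, Kcf m x y * f x := by
  exact clifford_fourier_continuous_schwartz_general m hm

end CliffordFourier
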